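/- Let K belong to the class R and let uv be an edge of K. Then d(uv) ≥ 4; that is, lk(uv,K) has at least four vertices. -/

import Mathlib

/-- An abstract simplicial complex on vertex set `ℕ`: a finite, downward closed
collection of nonempty finite sets of vertices. -/
structure SComplex where
  faces : Finset (Finset ℕ)
  not_empty_mem : ∅ ∉ faces
  down_closed : ∀ s ∈ faces, ∀ t ⊆ s, t ≠ ∅ → t ∈ faces

namespace SComplex

/-- The set of vertices of the complex. -/
def vertexSet (K : SComplex) : Finset ℕ := K.faces.sup id

/-- `fnum K i` is the number of `i`-dimensional faces of `K`. -/
def fnum (K : SComplex) (i : ℕ) : ℕ := (K.faces.filter fun s => s.card = i + 1).card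

/-- `g₂` for a 3-dimensional complex: `f₁ - 4 f₀ + 10`. -/
def g2 (K : SComplex) : ℤ := (K.fnum 1 : ℤ) - 4 * (K.fnum 0 : ℤ) + 10

/-- `g₂` for a 2-dimensional complex: `f₁ - 3 f₀ + 6`. -/
def g2surf (K : SComplex) : ℤ := (K.fnum 1 : ℤ) - 3 * (K.fnum 0 : ℤ) + 6

/-- Euler characteristic of a (2-dimensional) complex. -/
def euler (K : SComplex) : ℤ := (K.fnum 0 : ℤ) - (K.fnum 1 : ℤ) + (K.fnum 2 : ℤ)

/-- The link of a face `σ`. -/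
def lk (K : SComplex) (σ : Finset ℕ) : SComplex where
  faces := K.faces.filter fun γ => γ ∩ σ = ∅ ∧ γ ∪ σ ∈ K.faces
  not_empty_mem := fun h => K.not_empty_mem (Finset.mem_filter.mp h).1
  down_closed := by
    intro s hs t hts ht
    rw [Finset.mem_filter] at hs ⊢
    refine ⟨K.down_closed s hs.1 t hts ht, ?_, ?_⟩
    · have h1 : t ∩ σ ⊆ s ∩ σ := Finset.inter_subset_inter hts (Finset.Subset.refl σ)
      rw [hs.2.1] at h1
      exact Finset.subset_empty.mp h1
    · refine K.down_closed (s ∪ σ) hs.2.2 (t ∪ σ)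
        (Finset.union_subset_union hts (Finset.Subset.refl σ)) ?_
      intro hc
      exact ht (Finset.union_eq_empty.mp hc).1

/-- The (closed) star of a face `σ`. -/
def st (K : SComplex) (σ : Finset ℕ) : SComplex where
  faces := K.faces.filter fun α => α ∪ σ ∈ K.faces
  not_empty_mem := fun h => K.not_empty_mem (Finset.mem_filter.mp h).1
  down_closed := by
    intro s hs t hts ht
    rw [Finset.mem_filter] at hs ⊢
    refine ⟨K.down_closed s hs.1 t hts ht, ?_⟩
    refine K.down_closed (s ∪ σ) hs.2 (t ∪ σ)
      (Finset.union_subset_union hts (Finset.Subset.refl σ)) ?_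
    intro hc
    exact ht (Finset.union_eq_empty.mp hc).1

/-- A facet is a maximal face. -/
def IsFacet (K : SComplex) (s : Finset ℕ) : Prop :=
  s ∈ K.faces ∧ ∀ t ∈ K.faces, s ⊆ t → s = t

/-- A pure `d`-dimensional complex: all facets have `d+1` vertices. -/
def IsPure (K : SComplex) (d : ℕ) : Prop :=
  K.faces.Nonempty ∧ ∀ s, K.IsFacet s → s.card = d + 1

/-- Two facets are adjacent if they share a codimension-one face. -/
def FacetAdj (K : SComplex) (s t : Finset ℕ) : Prop :=
  K.IsFacet s ∧ K.IsFacet t ∧ (s ∩ t).card + 1 = s.card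

/-- Strong connectedness: any two facets are joined by a chain of facets, consecutive
ones sharing a codimension-one face. -/
def StronglyConnected (K : SComplex) : Prop :=
  ∀ s t, K.IsFacet s → K.IsFacet t → Relation.ReflTransGen K.FacetAdj s t

/-- Two vertices are adjacent if they span an edge. -/
def VertAdj (K : SComplex) (u v : ℕ) : Prop := ({u, v} : Finset ℕ) ∈ K.faces

/-- Connectedness of a complex (via its 1-skeleton). -/
def Conn (K : SComplex) : Prop :=
  K.faces.Nonempty ∧
    ∀ u v, {u} ∈ K.faces → {v} ∈ K.faces → Relation.ReflTransGen K.VertAdj u v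

/-- A normal `d`-pseudomanifold: pure, strongly connected, every `(d-1)`-face is in
exactly two facets, and links of faces of dimension at most `d-2` are connected. -/
def IsNormalPseudomanifold (K : SComplex) (d : ℕ) : Prop :=
  K.IsPure d ∧ K.StronglyConnected ∧
    (∀ s ∈ K.faces, s.card = d →
      (K.faces.filter fun F => F.card = d + 1 ∧ s ⊆ F).card = 2) ∧
    (∀ s ∈ K.faces, s.card ≤ d - 1 → (K.lk s).Conn)

/-- The geometric realization `|K|`, as a subspace of `ℕ → ℝ`. -/
def realSpace (K : SComplex) : Set (ℕ → ℝ) :=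
  {w | (∀ v, 0 ≤ w v) ∧ ∃ s ∈ K.faces, (∀ v, w v ≠ 0 → v ∈ s) ∧ ∑ v ∈ s, w v = 1}

/-- The link of the vertex `v` triangulates the `(d-1)`-sphere. -/
def HasSphereLink (K : SComplex) (d : ℕ) (v : ℕ) : Prop :=
  Nonempty (↥((K.lk {v}).realSpace) ≃ₜ
    ↥(Metric.sphere (0 : EuclideanSpace ℝ (Fin d)) 1))

/-- A singular vertex of a normal 3-pseudomanifold: its link is not a 2-sphere. -/
def IsSingular (K : SComplex) (v : ℕ) : Prop :=
  {v} ∈ K.faces ∧ ¬ K.HasSphereLink 3 v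

/-- `d(σ)`: the number of vertices of the link of `σ`. -/
def deg (K : SComplex) (σ : Finset ℕ) : ℕ := (K.lk σ).fnum 0

/-- The boundary complex of the simplex on vertex set `s`: all nonempty proper subsets. -/
def properFaces (s : Finset ℕ) : Finset (Finset ℕ) :=
  s.powerset.filter fun t => t ≠ ∅ ∧ t ≠ s

/-- All nonempty faces of the simplex on vertex set `s`. -/
def simplexFaces (s : Finset ℕ) : Finset (Finset ℕ) :=
  s.powerset.filter fun t => t ≠ ∅

/-- Operation (A): a bistellar 2-move on an edge `uv` with `lk(uv) = ∂(abc)`, `abc ∉ K`. -/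
def BistellarTwoMove (K K' : SComplex) : Prop :=
  ∃ u v a b c : ℕ,
    ({u, v} : Finset ℕ) ∈ K.faces ∧ u ≠ v ∧
    ({a, b, c} : Finset ℕ).card = 3 ∧
    u ∉ ({a, b, c} : Finset ℕ) ∧ v ∉ ({a, b, c} : Finset ℕ) ∧
    (K.lk {u, v}).faces = properFaces {a, b, c} ∧
    ({a, b, c} : Finset ℕ) ∉ K.faces ∧
    K'.faces = ((K.faces.filter fun α => ¬ ({u, v} : Finset ℕ) ⊆ α) ∪
      simplexFaces (insert u {a, b, c})) ∪ simplexFaces (insert v {a, b, c})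

/-- The faces of the boundary complex of a pure `d`-dimensional complex with face set `F`:
faces contained in some `(d-1)`-face lying in exactly one facet. -/
def bdryFaces (F : Finset (Finset ℕ)) (d : ℕ) : Finset (Finset ℕ) :=
  F.filter fun s => ∃ r ∈ F, s ⊆ r ∧ r.card = d ∧
    (F.filter fun t => t.card = d + 1 ∧ r ⊆ t).card = 1

/-- The faces of the cone with apex `w` over the complex with face set `F`. -/
def coneFaces (w : ℕ) (F : Finset (Finset ℕ)) : Finset (Finset ℕ) :=
  (F ∪ F.image (insert w)) ∪ {{w}}

/-- `K₁` is obtained from the normal `d`-pseudomanifold `K` by contracting the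
edge `uv` (satisfying the link condition): delete all faces containing `u` or `v`
and cone off the boundary of the result with a new vertex `w`. -/
def EdgeContractionAt (d : ℕ) (K : SComplex) (u v : ℕ) (K₁ : SComplex) : Prop :=
  ({u, v} : Finset ℕ) ∈ K.faces ∧ u ≠ v ∧
  (K.lk {u}).faces ∩ (K.lk {v}).faces = (K.lk {u, v}).faces ∧
  ∃ w, w ∉ K.vertexSet ∧
    K₁.faces = (K.faces.filter fun α => u ∉ α ∧ v ∉ α) ∪
      coneFaces w (bdryFaces (K.faces.filter fun α => u ∉ α ∧ v ∉ α) d)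

/-- Operation (B): an edge contraction in a 3-dimensional complex. -/
def EdgeContraction (K K₁ : SComplex) : Prop := ∃ u v, EdgeContractionAt 3 K u v K₁

/-- The class `R`: normal 3-pseudomanifolds with one or two singular vertices such that
(i) if `K` contains the boundary of a 3-simplex then it contains the 3-simplex and
(ii) no normal 3-pseudomanifold with smaller `g₂` is obtained from `K` by a
bistellar 2-move, an edge contraction, an edge expansion followed by a bistellar
2-move, or an edge expansion followed by an edge contraction. -/
def InClassR (K : SComplex) : Prop :=
  K.IsNormalPseudomanifold 3 ∧
  1 ≤ {v | K.IsSingular v}.ncard ∧ {v | K.IsSingular v}.ncard ≤ 2 ∧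
  (∀ s : Finset ℕ, s.card = 4 → (∀ t ∈ properFaces s, t ∈ K.faces) → s ∈ K.faces) ∧
  (∀ K' : SComplex, K'.IsNormalPseudomanifold 3 →
    (BistellarTwoMove K K' ∨ EdgeContraction K K' ∨
      (∃ M, EdgeContraction M K ∧ BistellarTwoMove M K') ∨
      (∃ M, EdgeContraction M K ∧ EdgeContraction M K')) →
    K.g2 ≤ K'.g2)

/-!
Every vertex of `lk(uv)` has two neighbours there, so an edge `uv` of degree less than 4 has
`lk(uv) = ∂(abc)`. If the triangle `abc` is not in `K`, the bistellar move replacing `uv * ∂(abc)`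
by `∂(uv) * abc` yields a normal pseudomanifold with one edge fewer and hence a smaller `g₂`,
against minimality. If `abc` is in `K`, then `K` contains the boundaries of `uabc` and `vabc`, hence
both tetrahedra, hence the whole boundary of the 4-simplex `uvabc`. Each triangle of that boundary
already lies in two of its tetrahedra, so strong connectedness leaves no room for further facets
and `K` is this boundary; but then every vertex link is a sphere and `K` has no singular vertex.
-/

section

open Finset

variable {K : SComplex} {A B S s t F G α γ σ : Finset ℕ} {d n x y : ℕ}

lemma nonempty_of_mem (hs : s ∈ K.faces) : s.Nonempty :=
  nonempty_iff_ne_empty.2 fun h => K.not_empty_mem (h ▸ hs)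

lemma mem_of_subset (ht : t ∈ K.faces) (hst : s ⊆ t) (hs : s.Nonempty) : s ∈ K.faces :=
  K.down_closed t ht s hst hs.ne_empty

lemma ext_faces {K L : SComplex} (h : K.faces = L.faces) : K = L := by
  cases K; cases L; congr

lemma mem_properFaces : t ∈ properFaces s ↔ t.Nonempty ∧ t ⊂ s := by
  simp only [properFaces, mem_filter, mem_powerset, nonempty_iff_ne_empty, ssubset_iff_subset_ne]
  tauto

lemma mem_simplexFaces : t ∈ simplexFaces s ↔ t.Nonempty ∧ t ⊆ s := by
  simp only [simplexFaces, mem_filter, mem_powerset, nonempty_iff_ne_empty, and_comm]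

lemma mem_lk : γ ∈ (K.lk σ).faces ↔ γ.Nonempty ∧ Disjoint γ σ ∧ γ ∪ σ ∈ K.faces := by
  simp only [lk, mem_filter, disjoint_iff_inter_eq_empty]
  exact ⟨fun h => ⟨nonempty_of_mem h.1, h.2⟩,
    fun h => ⟨mem_of_subset h.2.2 subset_union_left h.1, h.2⟩⟩

lemma mem_vertexSet : x ∈ K.vertexSet ↔ {x} ∈ K.faces := by
  simp only [vertexSet, mem_sup, id]
  exact ⟨fun ⟨s, hs, hx⟩ => mem_of_subset hs (singleton_subset_iff.2 hx) (singleton_nonempty x),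
    fun h => ⟨{x}, h, mem_singleton_self x⟩⟩

lemma fnum_zero : K.fnum 0 = #K.vertexSet := by
  have himage : (K.faces.filter fun s => #s = 0 + 1) = K.vertexSet.image singleton := by
    ext s
    simp only [mem_filter, zero_add, card_eq_one, mem_image, mem_vertexSet]
    grind
  rw [fnum, himage, card_image_of_injective _ singleton_injective]

lemma singleton_mem_lk : {x} ∈ (K.lk s).faces ↔ x ∉ s ∧ insert x s ∈ K.faces := by
  simp [mem_lk]

lemma mem_vertexSet_lk : x ∈ (K.lk s).vertexSet ↔ x ∉ s ∧ insert x s ∈ K.faces := by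
  rw [mem_vertexSet, singleton_mem_lk]

lemma vertAdj_lk :
    (K.lk s).VertAdj x y ↔ x ∉ s ∧ y ∉ s ∧ insert x (insert y s) ∈ K.faces := by
  simp [VertAdj, mem_lk, and_assoc, insert_union]

lemma VertAdj.symm (h : K.VertAdj x y) : K.VertAdj y x := by
  rwa [VertAdj, pair_comm]

lemma lk_eq_properFaces (hK : K.faces = properFaces S) (hσ : σ ⊆ S) :
    (K.lk σ).faces = properFaces (S \ σ) := by
  ext γ
  simp only [mem_lk, hK, mem_properFaces, ssubset_iff_subset_ne]
  grind [disjoint_left]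

/-! ### Pure complexes -/

lemma isPure_iff :
    K.IsPure d ↔ K.faces.Nonempty ∧ ∀ s ∈ K.faces, ∃ F ∈ K.faces, #F = d + 1 ∧ s ⊆ F := by
  refine and_congr_right fun _ => ⟨fun h s hs => ?_, fun h s hs => ?_⟩
  · obtain ⟨F, hsF, hF⟩ := K.faces.exists_le_maximal hs
    exact ⟨F, hF.1, h F ⟨hF.1, fun t ht hFt => hF.eq_of_le ht hFt⟩, hsF⟩
  · obtain ⟨F, hF, hcard, hsF⟩ := h s hs.1
    rwa [hs.2 F hF hsF]

namespace IsPure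

lemma card_le (hK : K.IsPure d) (hs : s ∈ K.faces) : #s ≤ d + 1 := by
  obtain ⟨F, -, hF, hsF⟩ := (isPure_iff.1 hK).2 s hs
  exact hF ▸ card_le_card hsF

lemma isFacet_iff (hK : K.IsPure d) : K.IsFacet s ↔ s ∈ K.faces ∧ #s = d + 1 :=
  ⟨fun hs => ⟨hs.1, hK.2 s hs⟩, fun hs => ⟨hs.1, fun _ ht hst =>
    eq_of_subset_of_card_le hst (hs.2 ▸ hK.card_le ht)⟩⟩

lemma facetAdj_iff (hK : K.IsPure d) :
    K.FacetAdj F G ↔ K.IsFacet F ∧ K.IsFacet G ∧ #(F ∩ G) = d := by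
  refine and_congr_right fun hF => and_congr_right fun _ => ?_
  rw [hK.2 F hF, Nat.add_right_cancel_iff]

lemma facetAdj_symm (hK : K.IsPure d) (h : K.FacetAdj F G) : K.FacetAdj G F := by
  rw [hK.facetAdj_iff] at h ⊢
  exact ⟨h.2.1, h.1, inter_comm F G ▸ h.2.2⟩

lemma reflTransGen_facetAdj (hK : K.IsPure d) (hF : K.IsFacet F) (hG : K.IsFacet G)
    (hFG : d ≤ #(F ∩ G)) : Relation.ReflTransGen K.FacetAdj F G := by
  obtain rfl | hne := eq_or_ne F G
  · exact .refl
  refine .single (hK.facetAdj_iff.2 ⟨hF, hG, hFG.antisymm' ?_⟩)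
  by_contra! hlt
  have hF' : F ∩ G = F := eq_of_subset_of_card_le inter_subset_left (by rw [hK.2 F hF]; omega)
  have hG' : F ∩ G = G := eq_of_subset_of_card_le inter_subset_right (by rw [hK.2 G hG]; omega)
  exact hne (hF'.symm.trans hG')

lemma reflTransGen_facetAdj_of_subset (hK : K.IsPure d) (hS : #S = d + 2) (hF : K.IsFacet F)
    (hG : K.IsFacet G) (hFS : F ⊆ S) (hGS : G ⊆ S) : Relation.ReflTransGen K.FacetAdj F G := by
  refine hK.reflTransGen_facetAdj hF hG ?_
  have hunion := card_le_card (union_subset hFS hGS)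
  have hadd := card_union_add_card_inter F G
  rw [hK.2 F hF, hK.2 G hG] at hadd
  omega

lemma exists_insert_mem (hK : K.IsPure d) (hs : s ∈ K.faces) (hcard : #s ≤ d) :
    ∃ x ∉ s, insert x s ∈ K.faces := by
  obtain ⟨F, hF, hFcard, hsF⟩ := (isPure_iff.1 hK).2 s hs
  obtain ⟨x, hxF, hxs⟩ := exists_mem_notMem_of_card_lt_card (show #s < #F by omega)
  exact ⟨x, hxs, mem_of_subset hF (insert_subset hxF hsF) (insert_nonempty x s)⟩

end IsPure

/-! ### Facets above a ridge -/

/-- The `d`-dimensional faces containing `t`. When `t` is a `(d - 1)`-face of a normal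
`d`-pseudomanifold there are exactly two of them. -/
def facetsOver (K : SComplex) (d : ℕ) (t : Finset ℕ) : Finset (Finset ℕ) :=
  K.faces.filter fun F => #F = d + 1 ∧ t ⊆ F

lemma mem_facetsOver : F ∈ K.facetsOver d t ↔ F ∈ K.faces ∧ #F = d + 1 ∧ t ⊆ F :=
  mem_filter

lemma card_facetsOver (ht : #t = d) : #(K.facetsOver d t) = #(K.lk t).vertexSet := by
  have himage : K.facetsOver d t = (K.lk t).vertexSet.image (insert · t) := by
    ext F
    simp only [mem_facetsOver, mem_image, mem_vertexSet_lk]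
    constructor
    · rintro ⟨hF, hcard, htF⟩
      obtain ⟨x, hx, rfl⟩ := exists_eq_insert_iff.2 ⟨htF, ht ▸ hcard.symm⟩
      exact ⟨x, ⟨hx, hF⟩, rfl⟩
    · rintro ⟨x, ⟨hx, hF⟩, rfl⟩
      exact ⟨hF, by rw [card_insert_of_notMem hx, ht], subset_insert x t⟩
  rw [himage, card_image_of_injOn]
  intro x hx y _ hxy
  exact (insert_inj (mem_vertexSet_lk.1 hx).1).1 hxy

lemma card_facetsOver_filter_subset (hS : #S = d + 2) (ht : t ⊆ S) :
    #((K.facetsOver d t).filter (· ⊆ S)) = #((S \ t).filter fun x => S.erase x ∈ K.faces) := by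
  have himage : (K.facetsOver d t).filter (· ⊆ S) =
      ((S \ t).filter fun x => S.erase x ∈ K.faces).image S.erase := by
    ext F
    simp only [mem_filter, mem_facetsOver, mem_image, mem_sdiff]
    constructor
    · rintro ⟨⟨hF, hcard, htF⟩, hFS⟩
      obtain ⟨x, hx, rfl⟩ := exists_eq_insert_iff.2 ⟨hFS, by omega⟩
      exact ⟨x, ⟨⟨mem_insert_self x F, fun hxt => hx (htF hxt)⟩, by rwa [erase_insert hx]⟩,
        erase_insert hx⟩
    · rintro ⟨x, ⟨⟨hxS, hxt⟩, hF⟩, rfl⟩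
      exact ⟨⟨hF, by rw [card_erase_of_mem hxS, hS]; rfl, subset_erase.2 ⟨ht, hxt⟩⟩,
        erase_subset x S⟩
  rw [himage, card_image_of_injOn]
  exact (erase_injOn S).mono fun x hx => (mem_sdiff.1 (mem_filter.1 hx).1).1

lemma erase_mem_properFaces (hS : 2 ≤ #S) (hx : x ∈ S) : S.erase x ∈ properFaces S :=
  mem_properFaces.2 ⟨card_pos.1 (by rw [card_erase_of_mem hx]; omega), erase_ssubset hx⟩

lemma subset_of_facetAdj (hd : d ≠ 0) (hpure : K.IsPure d)
    (hridge : ∀ t ∈ K.faces, #t = d → #(K.facetsOver d t) = 2)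
    (hS : #S = d + 2) (hSK : properFaces S ⊆ K.faces) (hFG : K.FacetAdj F G) (hFS : F ⊆ S) :
    G ⊆ S := by
  obtain ⟨hF, hG, hcard⟩ := hpure.facetAdj_iff.1 hFG
  have htS : F ∩ G ⊆ S := inter_subset_left.trans hFS
  have htK : F ∩ G ∈ K.faces := mem_of_subset hF.1 inter_subset_left (card_pos.1 (by omega))
  have hinside : (K.facetsOver d (F ∩ G)).filter (· ⊆ S) = K.facetsOver d (F ∩ G) := by
    refine eq_of_subset_of_card_le (filter_subset _ _) ?_
    rw [hridge _ htK hcard, card_facetsOver_filter_subset hS htS, filter_true_of_mem fun x hx =>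
      hSK (erase_mem_properFaces (by omega) (mem_sdiff.1 hx).1), card_sdiff_of_subset htS]
    omega
  have hGover : G ∈ K.facetsOver d (F ∩ G) :=
    mem_facetsOver.2 ⟨hG.1, hpure.2 G hG, inter_subset_right⟩
  rw [← hinside] at hGover
  exact (mem_filter.1 hGover).2

lemma faces_eq_properFaces (hd : d ≠ 0) (hpure : K.IsPure d) (hconn : K.StronglyConnected)
    (hridge : ∀ t ∈ K.faces, #t = d → #(K.facetsOver d t) = 2)
    (hS : #S = d + 2) (hSK : properFaces S ⊆ K.faces) : K.faces = properFaces S := by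
  have hreach {F G : Finset ℕ} (hFG : Relation.ReflTransGen K.FacetAdj F G) (hFS : F ⊆ S) :
      G ⊆ S := by
    induction hFG with
    | refl => exact hFS
    | tail _ hstep ih => exact subset_of_facetAdj hd hpure hridge hS hSK hstep ih
  refine Subset.antisymm (fun α hα => ?_) hSK
  obtain ⟨F, hF, hFcard, hαF⟩ := (isPure_iff.1 hpure).2 α hα
  obtain ⟨x, hx⟩ : S.Nonempty := card_pos.1 (by omega)
  have hxfacet : K.IsFacet (S.erase x) := hpure.isFacet_iff.2
    ⟨hSK (erase_mem_properFaces (by omega) hx), by rw [card_erase_of_mem hx, hS]; rfl⟩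
  have hFS : F ⊆ S :=
    hreach (hconn _ F hxfacet (hpure.isFacet_iff.2 ⟨hF, hFcard⟩)) (erase_subset x S)
  refine mem_properFaces.2 ⟨nonempty_of_mem hα, (hαF.trans hFS).ssubset_of_ne ?_⟩
  rintro rfl
  have := hpure.card_le hα
  omega

/-! ### The boundary of a simplex is a sphere -/

lemma mem_realSpace_iff (hK : K.faces = properFaces S) {w : ℕ → ℝ} :
    w ∈ K.realSpace ↔
      (∀ v, 0 ≤ w v) ∧ (∀ v ∉ S, w v = 0) ∧ ∑ v ∈ S, w v = 1 ∧ ∃ v ∈ S, w v = 0 := by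
  refine and_congr_right fun _ => ?_
  simp only [hK, mem_properFaces]
  constructor
  · rintro ⟨s, ⟨-, hsS⟩, hsupp, hsum⟩
    have hzero (v : ℕ) (hv : v ∉ s) : w v = 0 := by_contra fun h => hv (hsupp v h)
    obtain ⟨v, hvS, hvs⟩ := exists_of_ssubset hsS
    exact ⟨fun v hv => hzero v fun hvs => hv (hsS.1 hvs),
      by rw [← hsum, sum_subset hsS.1 fun v _ => hzero v], v, hvS, hzero v hvs⟩
  · rintro ⟨hzero, hsum, x, hxS, hx⟩
    have hsum' : ∑ v ∈ S.erase x, w v = 1 := by rw [sum_erase S hx, hsum]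
    refine ⟨S.erase x, ⟨?_, erase_ssubset hxS⟩, fun v hv => ?_, hsum'⟩
    · exact nonempty_of_sum_ne_zero (hsum' ▸ one_ne_zero)
    · exact mem_erase.2 ⟨fun h => hv (h ▸ hx), by_contra fun h => hv (hzero v h)⟩

lemma mem_frontier_convexHull_affineBasis {ι E : Type*} [Finite ι] [NormedAddCommGroup E]
    [NormedSpace ℝ E] (b : AffineBasis ι ℝ E) {z : E} :
    z ∈ frontier (convexHull ℝ (Set.range b)) ↔
      (∀ i, 0 ≤ b.coord i z) ∧ ∃ i, b.coord i z = 0 := by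
  rw [((Set.finite_range b).isClosed_convexHull ℝ).frontier_eq, b.interior_convexHull,
    b.convexHull_eq_nonneg_coord]
  refine and_congr_right fun (hz : ∀ i, 0 ≤ b.coord i z) => ?_
  simp only [Set.mem_ofPred_eq, not_forall, not_lt, fun i => (hz i).ge_iff_eq']

/-- Barycentric coordinates with respect to `b` identify the boundary of the geometric simplex
spanned by `b` with the realization of the boundary complex of the simplex on `S`. -/
noncomputable def frontierHomeomorphRealSpace {E : Type*} [NormedAddCommGroup E]
    [NormedSpace ℝ E] (b : AffineBasis S ℝ E) (hK : K.faces = properFaces S) :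
    frontier (convexHull ℝ (Set.range b)) ≃ₜ K.realSpace where
  toFun z := ⟨fun v => if hv : v ∈ S then b.coord ⟨v, hv⟩ z else 0, by
    obtain ⟨hnonneg, i, hi⟩ := (mem_frontier_convexHull_affineBasis b).1 z.2
    refine (mem_realSpace_iff hK).2 ⟨fun v => ?_, fun v hv => dif_neg hv, ?_, i, i.2, ?_⟩
    · split_ifs with hv
      exacts [hnonneg _, le_rfl]
    · rw [← sum_coe_sort]
      simpa using b.sum_coord_apply_eq_one (z : E)
    · simpa using hi⟩
  invFun w := ⟨∑ i : S, w.1 i • b i, by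
    obtain ⟨hnonneg, -, hsum, x, hxS, hx⟩ := (mem_realSpace_iff hK).1 w.2
    rw [← sum_coe_sort] at hsum
    rw [mem_frontier_convexHull_affineBasis,
      ← univ.affineCombination_eq_linear_combination b _ hsum]
    simp only [b.coord_apply_combination_of_mem (mem_univ _) hsum]
    exact ⟨fun i => hnonneg i, ⟨x, hxS⟩, hx⟩⟩
  left_inv z := by
    ext
    simpa using b.linear_combination_coord_eq_self (z : E)
  right_inv w := by
    obtain ⟨-, hzero, hsum, -⟩ := (mem_realSpace_iff hK).1 w.2
    rw [← sum_coe_sort] at hsum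
    ext v
    simp only [← univ.affineCombination_eq_linear_combination b _ hsum,
      b.coord_apply_combination_of_mem (mem_univ _) hsum]
    split_ifs with hv
    exacts [rfl, (hzero v hv).symm]
  continuous_toFun := by
    have := b.finiteDimensional
    refine Continuous.subtype_mk (continuous_pi fun v => ?_) _
    split_ifs with hv
    · exact (continuous_barycentric_coord b _).comp continuous_subtype_val
    · exact continuous_const
  continuous_invFun := by
    refine Continuous.subtype_mk (continuous_finsetSum _ fun i _ => ?_) _
    exact ((continuous_apply (i : ℕ)).comp continuous_subtype_val).smul continuous_const

lemma nonempty_realSpace_homeomorph_sphere (hK : K.faces = properFaces S) (hS : #S = n + 1) :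
    Nonempty (K.realSpace ≃ₜ Metric.sphere (0 : EuclideanSpace ℝ (Fin n)) 1) := by
  obtain ⟨b⟩ := AffineBasis.exists_affineBasis_of_finiteDimensional (ι := S) (k := ℝ)
    (P := EuclideanSpace ℝ (Fin n)) (by simp [hS])
  obtain ⟨h, -, -, hfrontier⟩ := exists_homeomorph_image_interior_closure_frontier_eq_unitBall
    (convex_convexHull ℝ (Set.range b)) ⟨_, b.centroid_mem_interior_convexHull⟩
    (isBounded_convexHull.2 (Set.finite_range b).isBounded)
  exact ⟨(frontierHomeomorphRealSpace b hK).symm.trans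
    ((h.image _).trans (Homeomorph.setCongr hfrontier))⟩

lemma not_isSingular_of_faces_eq_properFaces (hS : #S = 5) (hK : K.faces = properFaces S)
    (v : ℕ) : ¬ K.IsSingular v := by
  rintro ⟨hv, hns⟩
  have hvS : {v} ⊆ S := (mem_properFaces.1 (hK ▸ hv)).2.1
  exact hns (nonempty_realSpace_homeomorph_sphere (lk_eq_properFaces hK hvS)
    (by rw [card_sdiff_of_subset hvS, hS, card_singleton]))

lemma InClassR.faces_ne_properFaces (hK : InClassR K) (hS : #S = 5) : K.faces ≠ properFaces S := by
  obtain ⟨w, hw⟩ := Set.nonempty_of_ncard_ne_zero (Nat.one_le_iff_ne_zero.1 hK.2.1)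
  exact fun hKS => not_isSingular_of_faces_eq_properFaces hS hKS w hw

/-! ### Bistellar moves -/

/-- The link of the face `A` is the boundary complex of the simplex on `B`, so that a bistellar
move may replace the star `A * ∂B` of `A` by `∂A * B`. -/
structure HasBoundaryLink (K : SComplex) (A B : Finset ℕ) : Prop where
  mem : A ∈ K.faces
  disjoint : Disjoint A B
  lk_faces : (K.lk A).faces = properFaces B

namespace HasBoundaryLink

lemma sdiff_mem_properFaces (h : K.HasBoundaryLink A B) (hα : α ∈ K.faces) (hA : A ⊂ α) :
    α \ A ∈ properFaces B := by
  rw [← h.lk_faces, mem_lk]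
  exact ⟨sdiff_nonempty.2 hA.2, sdiff_disjoint, by rwa [sdiff_union_of_subset hA.1]⟩

lemma subset_union (h : K.HasBoundaryLink A B) (hα : α ∈ K.faces) (hA : A ⊆ α) : α ⊆ A ∪ B := by
  obtain rfl | hne := eq_or_ne A α
  · exact subset_union_left
  · exact sdiff_le_iff.1
      (mem_properFaces.1 (h.sdiff_mem_properFaces hα (hA.ssubset_of_ne hne))).2.1

lemma union_mem (h : K.HasBoundaryLink A B) (hγ : γ ⊂ B) : A ∪ γ ∈ K.faces := by
  obtain rfl | hne := γ.eq_empty_or_nonempty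
  · rw [union_empty]
    exact h.mem
  · rw [union_comm]
    exact (mem_lk.1 (h.lk_faces ▸ mem_properFaces.2 ⟨hne, hγ⟩)).2.2

lemma mem_faces (h : K.HasBoundaryLink A B) (hα : α ⊆ A ∪ B) (hne : α.Nonempty)
    (hB : ¬ B ⊆ α) : α ∈ K.faces := by
  refine mem_of_subset (h.union_mem (γ := α ∩ B) ⟨inter_subset_right, fun hB' => ?_⟩)
    (fun x hx => ?_) hne
  · exact hB (hB'.trans inter_subset_left)
  · have := hα hx
    grind

lemma properFaces_subset (h : K.HasBoundaryLink A B) (hA : #A = 2) (hB : B ∈ K.faces)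
    (hmiss : ∀ s, #s = #B + 1 → properFaces s ⊆ K.faces → s ∈ K.faces) :
    properFaces (A ∪ B) ⊆ K.faces := by
  have hinsert (x : ℕ) (hx : x ∈ A) : insert x B ∈ K.faces := by
    have hxB := disjoint_left.1 h.disjoint hx
    refine hmiss _ (card_insert_of_notMem hxB) fun t ht => ?_
    obtain ⟨hne, hts⟩ := mem_properFaces.1 ht
    by_cases hBt : B ⊆ t
    · have hlt := card_lt_card hts
      rw [card_insert_of_notMem hxB, Nat.lt_succ_iff] at hlt
      rwa [← eq_of_subset_of_card_le hBt hlt]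
    · exact h.mem_faces (hts.1.trans (insert_subset (mem_union_left B hx) subset_union_right))
        hne hBt
  intro t ht
  obtain ⟨hne, htAB⟩ := mem_properFaces.1 ht
  by_cases hBt : B ⊆ t
  · obtain ⟨y, hyAB, hyt⟩ := exists_of_ssubset htAB
    have hyA : y ∈ A := (mem_union.1 hyAB).resolve_right fun hyB => hyt (hBt hyB)
    obtain ⟨x, hx⟩ := card_eq_one.1 (card_erase_of_mem hyA ▸ hA ▸ rfl : #(A.erase y) = 1)
    refine mem_of_subset (hinsert x ?_) (fun z hz => ?_) hne
    · exact erase_subset y A (hx ▸ mem_singleton_self x)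
    · refine mem_insert.2 ((mem_union.1 (htAB.1 hz)).imp_left fun hzA => ?_)
      rw [← mem_singleton, ← hx]
      exact mem_erase.2 ⟨ne_of_mem_of_not_mem hz hyt, hzA⟩
  · exact h.mem_faces htAB.1 hne hBt

end HasBoundaryLink

/-- Cut the path at its first vertex in `N`; the steps before it are steps of `r₂`. -/
lemma reflTransGen_of_entering {α : Type*} {r₁ r₂ : α → α → Prop} {N : Set α} {x p q : α}
    (hstep : ∀ x ∉ N, ∀ y ∉ N, r₁ x y → r₂ x y)
    (henter : ∀ x ∉ N, ∀ y ∈ N, r₁ x y → Relation.ReflTransGen r₂ x p)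
    (hxq : Relation.ReflTransGen r₁ x q) (hx : x ∉ N) (hq : q ∈ N) :
    Relation.ReflTransGen r₂ x p := by
  induction hxq using Relation.ReflTransGen.head_induction_on with
  | refl => exact absurd hq hx
  | @head x y hxy _ ih =>
    by_cases hy : y ∈ N
    · exact henter x hx y hy hxy
    · exact .head (hstep x hx y hy hxy) (ih hy)

/-- The result of the bistellar move replacing `A * ∂B` by `∂A * B`: the simplex on `A ∪ B` is
glued in and every face containing `A` is deleted. It is only meaningful when
`K.HasBoundaryLink A B`. -/
def flip (K : SComplex) (A B : Finset ℕ) : SComplex where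
  faces := (K.faces ∪ simplexFaces (A ∪ B)).filter (¬ A ⊆ ·)
  not_empty_mem h := by
    obtain hK | hS := mem_union.1 (mem_filter.1 h).1
    exacts [K.not_empty_mem hK, (mem_simplexFaces.1 hS).1.ne_empty rfl]
  down_closed s hs t hts ht := by
    simp only [mem_filter, mem_union, mem_simplexFaces] at hs ⊢
    exact ⟨hs.1.imp (mem_of_subset · hts (nonempty_iff_ne_empty.2 ht))
      fun h => ⟨nonempty_iff_ne_empty.2 ht, hts.trans h.2⟩, fun hA => hs.2 (hA.trans hts)⟩

lemma mem_flip :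
    α ∈ (K.flip A B).faces ↔ (α ∈ K.faces ∨ α.Nonempty ∧ α ⊆ A ∪ B) ∧ ¬ A ⊆ α := by
  simp only [flip, mem_filter, mem_union, mem_simplexFaces]

lemma mem_flip_of_subset (hα : α ⊆ A ∪ B) :
    α ∈ (K.flip A B).faces ↔ α.Nonempty ∧ ¬ A ⊆ α := by
  rw [mem_flip]
  exact and_congr_left fun _ => ⟨Or.rec nonempty_of_mem And.left, fun h => .inr ⟨h, hα⟩⟩

lemma erase_mem_flip_iff (hcard : #(A ∪ B) ≠ 1) (hx : x ∈ A ∪ B) :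
    (A ∪ B).erase x ∈ (K.flip A B).faces ↔ x ∈ A := by
  rw [mem_flip_of_subset (erase_subset x _), subset_erase, ← card_pos, card_erase_of_mem hx]
  have := card_pos.2 ⟨x, hx⟩
  simp only [subset_union_left, true_and, not_not, and_iff_right_iff_imp]
  omega

namespace HasBoundaryLink

lemma nonempty_left (h : K.HasBoundaryLink A B) : A.Nonempty := nonempty_of_mem h.mem

lemma mem_flip_of_not_subset (h : K.HasBoundaryLink A B) (hα : ¬ α ⊆ A ∪ B) :
    α ∈ (K.flip A B).faces ↔ α ∈ K.faces := by
  rw [mem_flip]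
  exact ⟨fun hα' => hα'.1.resolve_right fun h => hα h.2,
    fun hα' => ⟨.inl hα', fun hA => hα (h.subset_union hα' hA)⟩⟩

lemma erase_mem_iff (h : K.HasBoundaryLink A B) (hB : B ∉ K.faces) (hBne : B.Nonempty) :
    (A ∪ B).erase x ∈ K.faces ↔ x ∈ B := by
  refine ⟨fun hxK => by_contra fun hxB => ?_, fun hxB => ?_⟩
  · exact hB (mem_of_subset hxK (subset_erase.2 ⟨subset_union_right, hxB⟩) hBne)
  · obtain ⟨y, hyA⟩ := h.nonempty_left
    have hyx : y ≠ x := fun hyx => disjoint_left.1 h.disjoint hyA (hyx ▸ hxB)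
    exact h.mem_faces (erase_subset x _) ⟨y, mem_erase.2 ⟨hyx, mem_union_left B hyA⟩⟩
      fun hBx => notMem_erase x _ (hBx hxB)

lemma isPure_flip (h : K.HasBoundaryLink A B) (hS : #(A ∪ B) = d + 2) (hK : K.IsPure d) :
    (K.flip A B).IsPure d := by
  have hfacet (x : ℕ) (hx : x ∈ A) :
      (A ∪ B).erase x ∈ (K.flip A B).faces ∧ #((A ∪ B).erase x) = d + 1 := by
    have hcard : #((A ∪ B).erase x) = d + 1 := by
      rw [card_erase_of_mem (mem_union_left B hx), hS]
      rfl
    exact ⟨(erase_mem_flip_iff (by omega) (mem_union_left B hx)).2 hx, hcard⟩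
  refine isPure_iff.2 ⟨?_, fun s hs => ?_⟩
  · obtain ⟨x, hx⟩ := h.nonempty_left
    exact ⟨_, (hfacet x hx).1⟩
  · by_cases hsS : s ⊆ A ∪ B
    · obtain ⟨x, hxA, hxs⟩ := not_subset.1 ((mem_flip_of_subset hsS).1 hs).2
      exact ⟨_, (hfacet x hxA).1, (hfacet x hxA).2, subset_erase.2 ⟨hsS, hxs⟩⟩
    · obtain ⟨F, hF, hcard, hsF⟩ :=
        (isPure_iff.1 hK).2 s ((h.mem_flip_of_not_subset hsS).1 hs)
      exact ⟨F, (h.mem_flip_of_not_subset fun hFS => hsS (hsF.trans hFS)).2 hF, hcard, hsF⟩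

lemma isFacet_flip_erase (h : K.HasBoundaryLink A B) (hS : #(A ∪ B) = d + 2) (hK : K.IsPure d)
    (hx : x ∈ A) : (K.flip A B).IsFacet ((A ∪ B).erase x) := by
  have hxS : x ∈ A ∪ B := mem_union_left B hx
  refine (h.isPure_flip hS hK).isFacet_iff.2 ⟨(erase_mem_flip_iff (by omega) hxS).2 hx, ?_⟩
  rw [card_erase_of_mem hxS, hS]
  rfl

lemma facetAdj_flip (h : K.HasBoundaryLink A B) (hS : #(A ∪ B) = d + 2) (hK : K.IsPure d)
    (hF : ¬ F ⊆ A ∪ B) (hG : ¬ G ⊆ A ∪ B) (hFG : K.FacetAdj F G) : (K.flip A B).FacetAdj F G := by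
  rwa [(h.isPure_flip hS hK).facetAdj_iff, (h.isPure_flip hS hK).isFacet_iff,
    (h.isPure_flip hS hK).isFacet_iff, h.mem_flip_of_not_subset hF, h.mem_flip_of_not_subset hG,
    ← hK.isFacet_iff, ← hK.isFacet_iff, ← hK.facetAdj_iff]

lemma reflTransGen_facetAdj_flip (h : K.HasBoundaryLink A B) (hS : #(A ∪ B) = d + 2)
    (hK : K.IsPure d) (hconn : K.StronglyConnected) {P : Finset ℕ}
    (hP : (K.flip A B).IsFacet P) (hPS : P ⊆ A ∪ B) (hF : (K.flip A B).IsFacet F) :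
    Relation.ReflTransGen (K.flip A B).FacetAdj F P := by
  have hpure := h.isPure_flip hS hK
  by_cases hFS : F ⊆ A ∪ B
  · exact hpure.reflTransGen_facetAdj_of_subset hS hF hP hFS hPS
  obtain ⟨Q, hQ, hQcard, hAQ⟩ := (isPure_iff.1 hK).2 A h.mem
  have hFK : K.IsFacet F := by
    rwa [hK.isFacet_iff, ← h.mem_flip_of_not_subset hFS, ← hpure.isFacet_iff]
  refine reflTransGen_of_entering (N := {F | F ⊆ A ∪ B})
    (fun F hF G hG => h.facetAdj_flip hS hK hF hG) (fun F hFS G hGS hFG => ?_)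
    (hconn F Q hFK (hK.isFacet_iff.2 ⟨hQ, hQcard⟩)) hFS (h.subset_union hQ hAQ)
  obtain ⟨hFK, -, hcard⟩ := hK.facetAdj_iff.1 hFG
  have hF : (K.flip A B).IsFacet F := by
    rwa [hpure.isFacet_iff, h.mem_flip_of_not_subset hFS, ← hK.isFacet_iff]
  obtain ⟨q, hqA, hqF⟩ := not_subset.1 (mem_flip.1 hF.1).2
  have hq := h.isFacet_flip_erase hS hK hqA
  refine .trans (hpure.reflTransGen_facetAdj hF hq ?_)
    (hpure.reflTransGen_facetAdj_of_subset hS hq hP (erase_subset q _) hPS)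
  rw [← hcard]
  exact card_le_card (subset_inter inter_subset_left
    (subset_erase.2 ⟨inter_subset_right.trans hGS, fun hq => hqF (mem_inter.1 hq).1⟩))

lemma stronglyConnected_flip (h : K.HasBoundaryLink A B) (hS : #(A ∪ B) = d + 2)
    (hK : K.IsPure d) (hconn : K.StronglyConnected) : (K.flip A B).StronglyConnected := by
  have hpure := h.isPure_flip hS hK
  obtain ⟨p, hpA⟩ := h.nonempty_left
  have hreach {F : Finset ℕ} := h.reflTransGen_facetAdj_flip (F := F) hS hK hconn
    (h.isFacet_flip_erase hS hK hpA) (erase_subset p _)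
  exact fun F G hF hG => (hreach hF).trans (Relation.reflTransGen_swap.1
    (Relation.ReflTransGen.mono (fun _ _ => hpure.facetAdj_symm) _ _ (hreach hG)))

end HasBoundaryLink

lemma card_facetsOver_flip_filter_subset (hS : #(A ∪ B) = d + 2) (ht : t ⊆ A ∪ B) :
    #(((K.flip A B).facetsOver d t).filter (· ⊆ A ∪ B)) = #(A \ t) := by
  rw [card_facetsOver_filter_subset hS ht]
  congr 1
  ext x
  simp only [mem_filter, mem_sdiff]
  constructor
  · exact fun hx => ⟨(erase_mem_flip_iff (by omega) hx.1.1).1 hx.2, hx.1.2⟩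
  · exact fun hx => ⟨⟨mem_union_left B hx.1, hx.2⟩,
      (erase_mem_flip_iff (by omega) (mem_union_left B hx.1)).2 hx.1⟩

namespace HasBoundaryLink

lemma nonempty_right (h : K.HasBoundaryLink A B) (hS : #(A ∪ B) = d + 2) (hK : K.IsPure d) :
    B.Nonempty := by
  rw [nonempty_iff_ne_empty]
  rintro rfl
  have hA := hK.card_le h.mem
  rw [union_empty] at hS
  omega

lemma facetsOver_flip_filter_not_subset (h : K.HasBoundaryLink A B) :
    ((K.flip A B).facetsOver d t).filter (¬ · ⊆ A ∪ B) =
      (K.facetsOver d t).filter (¬ · ⊆ A ∪ B) := by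
  ext F
  simp only [mem_filter, mem_facetsOver]
  exact and_congr_left fun hF => and_congr_left fun _ => h.mem_flip_of_not_subset hF

lemma card_facetsOver_filter_subset_union (h : K.HasBoundaryLink A B) (hS : #(A ∪ B) = d + 2)
    (hK : K.IsPure d) (hB : B ∉ K.faces) (ht : t ⊆ A ∪ B) :
    #((K.facetsOver d t).filter (· ⊆ A ∪ B)) = #(B \ t) := by
  rw [card_facetsOver_filter_subset hS ht]
  congr 1
  ext x
  simp only [mem_filter, mem_sdiff, h.erase_mem_iff hB (h.nonempty_right hS hK), mem_union]
  tauto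

/-- Of the simplices `(A ∪ B) \ {x}` over a ridge `t ⊆ A ∪ B`, the flip exchanges those with
`x ∈ B`, which belong to `K`, for those with `x ∈ A`. -/
lemma card_facetsOver_flip (h : K.HasBoundaryLink A B) (hS : #(A ∪ B) = d + 2)
    (hK : K.IsPure d) (hB : B ∉ K.faces)
    (hridge : ∀ t ∈ K.faces, #t = d → #(K.facetsOver d t) = 2)
    (ht : t ∈ (K.flip A B).faces) (hcard : #t = d) : #((K.flip A B).facetsOver d t) = 2 := by
  have hsplit (L : SComplex) := card_filter_add_card_filter_not (s := L.facetsOver d t) (· ⊆ A ∪ B)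
  by_cases htS : t ⊆ A ∪ B
  · have hsdiff : #(A \ t) + #(B \ t) = 2 := by
      rw [← card_union_of_disjoint (h.disjoint.mono sdiff_subset sdiff_subset),
        ← union_sdiff_distrib, card_sdiff_of_subset htS, hS, hcard, Nat.add_sub_cancel_left]
    have hAt : 0 < #(A \ t) := card_pos.2 (sdiff_nonempty.2 ((mem_flip_of_subset htS).1 ht).2)
    rw [← hsplit, card_facetsOver_flip_filter_subset hS htS, h.facetsOver_flip_filter_not_subset]
    by_cases hBt : B ⊆ t
    · have houtside : (K.facetsOver d t).filter (¬ · ⊆ A ∪ B) = ∅ := filter_eq_empty_iff.2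
        fun F hF => absurd (mem_of_subset (mem_facetsOver.1 hF).1
          (hBt.trans (mem_facetsOver.1 hF).2.2) (h.nonempty_right hS hK)) hB
      rw [sdiff_eq_empty_iff_subset.2 hBt, card_empty] at hsdiff
      rw [houtside, card_empty, hsdiff]
    · have hBt' : 0 < #(B \ t) := card_pos.2 (sdiff_nonempty.2 hBt)
      have hK' := hsplit K
      rw [hridge t (h.mem_faces htS (nonempty_of_mem ht) hBt) hcard,
        h.card_facetsOver_filter_subset_union hS hK hB htS] at hK'
      omega
  · have houtside (L : SComplex) :
        (L.facetsOver d t).filter (¬ · ⊆ A ∪ B) = L.facetsOver d t := filter_true_of_mem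
      fun F hF hFS => htS ((mem_facetsOver.1 hF).2.2.trans hFS)
    rw [← houtside, h.facetsOver_flip_filter_not_subset, houtside]
    exact hridge t ((h.mem_flip_of_not_subset htS).1 ht) hcard

lemma lk_flip_of_not_subset (h : K.HasBoundaryLink A B) (hs : ¬ s ⊆ A ∪ B) :
    (K.flip A B).lk s = K.lk s := by
  refine ext_faces (ext fun γ => ?_)
  rw [mem_lk, mem_lk, h.mem_flip_of_not_subset fun hγs => hs (subset_union_right.trans hγs)]

lemma vertAdj_lk_flip (h : K.HasBoundaryLink A B) (hS : #(A ∪ B) = d + 2) (hK : K.IsPure d)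
    (hB : B ∉ K.faces) (hBs : B ⊆ s) (hcard : #s < d)
    (hx : x ∈ ((K.flip A B).lk s).vertexSet) (hy : y ∈ ((K.flip A B).lk s).vertexSet) :
    ((K.flip A B).lk s).VertAdj x y := by
  have hsub {α : Finset ℕ} (hα : α ∈ (K.flip A B).faces) (hsα : s ⊆ α) : α ⊆ A ∪ B := by
    by_contra hαS
    exact hB (mem_of_subset ((h.mem_flip_of_not_subset hαS).1 hα) (hBs.trans hsα)
      (h.nonempty_right hS hK))
  obtain ⟨hxs, hx⟩ := mem_vertexSet_lk.1 hx
  obtain ⟨hys, hy⟩ := mem_vertexSet_lk.1 hy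
  have hxyS : insert x (insert y s) ⊆ A ∪ B :=
    insert_subset (hsub hx (subset_insert x s) (mem_insert_self x s)) (hsub hy (subset_insert y s))
  refine vertAdj_lk.2 ⟨hxs, hys, (mem_flip_of_subset hxyS).2 ⟨insert_nonempty x _, fun hA => ?_⟩⟩
  have hAB : A ∪ B ⊆ insert x (insert y s) :=
    union_subset hA (hBs.trans ((subset_insert y s).trans (subset_insert x _)))
  have := card_le_card hAB
  have := card_insert_le x (insert y s)
  have := card_insert_le y s
  omega

lemma vertAdj_lk_flip_of_mem_right (h : K.HasBoundaryLink A B) (hsS : s ⊆ A ∪ B) {p : ℕ}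
    (hpB : p ∈ B) (hps : p ∉ s) (hx : x ∈ ((K.flip A B).lk s).vertexSet) (hxS : x ∈ A ∪ B) :
    ((K.flip A B).lk s).VertAdj x p := by
  obtain ⟨hxs, hx⟩ := mem_vertexSet_lk.1 hx
  refine vertAdj_lk.2 ⟨hxs, hps, (mem_flip_of_subset ?_).2 ⟨insert_nonempty x _, fun hA => ?_⟩⟩
  · exact insert_subset hxS (insert_subset (mem_union_right A hpB) hsS)
  · rw [insert_comm, subset_insert_iff_of_notMem (disjoint_right.1 h.disjoint hpB)] at hA
    exact (mem_flip.1 hx).2 hA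

lemma reflTransGen_vertAdj_lk_flip (h : K.HasBoundaryLink A B) (hs : s ∈ (K.flip A B).faces)
    (hconn : ∀ x ∈ (K.lk s).vertexSet, ∀ y ∈ (K.lk s).vertexSet,
      Relation.ReflTransGen (K.lk s).VertAdj x y)
    (hsS : s ⊆ A ∪ B) {p : ℕ} (hpB : p ∈ B) (hps : p ∉ s)
    (hx : x ∈ ((K.flip A B).lk s).vertexSet) :
    Relation.ReflTransGen ((K.flip A B).lk s).VertAdj x p := by
  by_cases hxS : x ∈ A ∪ B
  · exact .single (h.vertAdj_lk_flip_of_mem_right hsS hpB hps hx hxS)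
  have hvertAdj {x y : ℕ} (hxS : x ∉ A ∪ B) :
      ((K.flip A B).lk s).VertAdj x y ↔ (K.lk s).VertAdj x y := by
    rw [vertAdj_lk, vertAdj_lk, h.mem_flip_of_not_subset fun hS => hxS (hS (mem_insert_self x _))]
  have hxK : x ∈ (K.lk s).vertexSet := by
    rwa [mem_vertexSet_lk, ← h.mem_flip_of_not_subset fun hS => hxS (hS (mem_insert_self x s)),
      ← mem_vertexSet_lk]
  obtain ⟨q, hqA, hqs⟩ := not_subset.1 (mem_flip.1 hs).2
  have hqK : q ∈ (K.lk s).vertexSet := by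
    refine mem_vertexSet_lk.2 ⟨hqs, h.mem_faces (insert_subset (mem_union_left B hqA) hsS)
      (insert_nonempty q s) fun hBq => ?_⟩
    obtain rfl | hps' := mem_insert.1 (hBq hpB)
    exacts [disjoint_left.1 h.disjoint hqA hpB, hps hps']
  refine reflTransGen_of_entering (N := ↑(A ∪ B)) (fun x hxS y _ => (hvertAdj hxS).2)
    (fun x hxS y hyS hxy => ?_) (hconn x hxK q hqK) hxS (mem_union_left B hqA)
  have hxy' := (hvertAdj hxS).2 hxy
  refine .head hxy' (.single (h.vertAdj_lk_flip_of_mem_right hsS hpB hps ?_ hyS))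
  exact mem_vertexSet.2 (mem_of_subset hxy' (by simp) (singleton_nonempty y))

lemma conn_lk_flip (h : K.HasBoundaryLink A B) (hS : #(A ∪ B) = d + 2) (hK : K.IsPure d)
    (hB : B ∉ K.faces) (hconn : ∀ s ∈ K.faces, #s ≤ d - 1 → (K.lk s).Conn)
    (hs : s ∈ (K.flip A B).faces) (hcard : #s ≤ d - 1) : ((K.flip A B).lk s).Conn := by
  have hspos : 0 < #s := card_pos.2 (nonempty_of_mem hs)
  by_cases hsS : s ⊆ A ∪ B
  swap
  · rw [h.lk_flip_of_not_subset hsS]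
    exact hconn s ((h.mem_flip_of_not_subset hsS).1 hs) hcard
  obtain ⟨x, hxs, hx⟩ := (h.isPure_flip hS hK).exists_insert_mem hs (by omega)
  refine ⟨⟨{x}, singleton_mem_lk.2 ⟨hxs, hx⟩⟩, ?_⟩
  simp only [← mem_vertexSet]
  by_cases hBs : B ⊆ s
  · exact fun x y hx hy => .single (h.vertAdj_lk_flip hS hK hB hBs (by omega) hx hy)
  · obtain ⟨p, hpB, hps⟩ := not_subset.1 hBs
    have hsK : s ∈ K.faces := h.mem_faces hsS (nonempty_of_mem hs) hBs
    have hreach {x : ℕ} := h.reflTransGen_vertAdj_lk_flip (x := x) hs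
      (fun x hx y hy => (hconn s hsK hcard).2 x y (mem_vertexSet.1 hx) (mem_vertexSet.1 hy))
      hsS hpB hps
    exact fun x y hx hy => (hreach hx).trans (Relation.reflTransGen_swap.1
      (Relation.ReflTransGen.mono (fun _ _ => VertAdj.symm) _ _ (hreach hy)))

lemma isNormalPseudomanifold_flip (h : K.HasBoundaryLink A B) (hS : #(A ∪ B) = d + 2)
    (hB : B ∉ K.faces) (hK : K.IsNormalPseudomanifold d) :
    (K.flip A B).IsNormalPseudomanifold d := by
  obtain ⟨hpure, hstrong, hridge, hconn⟩ := hK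
  exact ⟨h.isPure_flip hS hpure, h.stronglyConnected_flip hS hpure hstrong,
    fun _ => h.card_facetsOver_flip hS hpure hB hridge,
    fun _ => h.conn_lk_flip hS hpure hB hconn⟩

lemma mem_flip_of_card_lt (h : K.HasBoundaryLink A B) (hα : #α < #B) :
    α ∈ (K.flip A B).faces ↔ α ∈ K.faces ∧ ¬ A ⊆ α := by
  rw [mem_flip, or_iff_left_of_imp]
  exact fun hαS => h.mem_faces hαS.2 hαS.1 fun hBα => hα.not_ge (card_le_card hBα)

lemma fnum_flip_of_lt (h : K.HasBoundaryLink A B) {i : ℕ} (hA : i + 1 < #A) (hB : i + 1 < #B) :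
    (K.flip A B).fnum i = K.fnum i := by
  refine congrArg card (ext fun α => ?_)
  simp only [mem_filter]
  refine and_congr_left fun hα => ?_
  rw [h.mem_flip_of_card_lt (hα ▸ hB), and_iff_left]
  exact fun hAα => hA.not_ge (hα ▸ card_le_card hAα)

lemma fnum_flip_add_one (h : K.HasBoundaryLink A B) {i : ℕ} (hA : #A = i + 1) (hB : i + 1 < #B) :
    (K.flip A B).fnum i + 1 = K.fnum i := by
  have hinsert : K.faces.filter (#· = i + 1) =
      insert A ((K.flip A B).faces.filter (#· = i + 1)) := by
    ext α
    simp only [mem_insert, mem_filter]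
    obtain rfl | hne := eq_or_ne α A
    · exact iff_of_true ⟨h.mem, hA⟩ (.inl rfl)
    rw [or_iff_right hne]
    refine and_congr_left fun hα => ?_
    rw [h.mem_flip_of_card_lt (hα ▸ hB), and_iff_left]
    exact fun hAα => hne (eq_of_subset_of_card_le hAα (by rw [hα, hA])).symm
  rw [fnum, fnum, hinsert, card_insert_of_notMem]
  exact fun hAflip => (mem_flip.1 (mem_filter.1 hAflip).1).2 Subset.rfl

lemma g2_flip (h : K.HasBoundaryLink A B) (hA : #A = 2) (hB : 2 < #B) :
    (K.flip A B).g2 = K.g2 - 1 := by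
  have h0 := h.fnum_flip_of_lt (i := 0) (by omega) (by omega)
  have h1 := h.fnum_flip_add_one hA hB
  rw [g2, g2, h0, ← h1]
  push_cast
  ring

lemma bistellarTwoMove_flip (h : K.HasBoundaryLink A B) (hA : #A = 2) (hB : #B = 3)
    (hBK : B ∉ K.faces) : BistellarTwoMove K (K.flip A B) := by
  obtain ⟨u, v, huv, rfl⟩ := card_eq_two.1 hA
  obtain ⟨a, b, c, -, -, -, rfl⟩ := card_eq_three.1 hB
  have hdisj := disjoint_left.1 h.disjoint
  refine ⟨u, v, a, b, c, h.mem, huv, hB, hdisj (by simp), hdisj (by simp), h.lk_faces, hBK, ?_⟩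
  set B : Finset ℕ := {a, b, c}
  ext α
  simp only [mem_flip, mem_union, mem_filter, mem_simplexFaces]
  grind

end HasBoundaryLink

/-! ### Faces of codimension two with few neighbours -/

lemma vertexSet_lk_insert_subset :
    (K.lk (insert x A)).vertexSet ⊆ (K.lk A).vertexSet.erase x := by
  intro y hy
  simp only [mem_erase, mem_vertexSet_lk, mem_insert, not_or] at hy ⊢
  exact ⟨hy.1.1, hy.1.2, mem_of_subset hy.2 (insert_subset_insert y (subset_insert x A))
    (insert_nonempty y A)⟩

lemma card_vertexSet_lk_insert (hridge : ∀ t ∈ K.faces, #t = d → #(K.facetsOver d t) = 2)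
    (hcard : #A + 1 = d) (hx : x ∈ (K.lk A).vertexSet) :
    #(K.lk (insert x A)).vertexSet = 2 := by
  obtain ⟨hxA, hx⟩ := mem_vertexSet_lk.1 hx
  have hxcard : #(insert x A) = d := by rw [card_insert_of_notMem hxA, hcard]
  rw [← card_facetsOver hxcard, hridge _ hx hxcard]

lemma three_le_card_vertexSet_lk (hK : K.IsPure d)
    (hridge : ∀ t ∈ K.faces, #t = d → #(K.facetsOver d t) = 2) (hA : A ∈ K.faces)
    (hcard : #A + 1 = d) : 3 ≤ #(K.lk A).vertexSet := by
  obtain ⟨x, hxA, hx⟩ := hK.exists_insert_mem hA (by omega)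
  have hxV : x ∈ (K.lk A).vertexSet := mem_vertexSet_lk.2 ⟨hxA, hx⟩
  have hle := card_le_card (vertexSet_lk_insert_subset (K := K) (A := A) (x := x))
  rw [card_vertexSet_lk_insert hridge hcard hxV, card_erase_of_mem hxV] at hle
  omega

lemma hasBoundaryLink_vertexSet_lk (hK : K.IsPure d)
    (hridge : ∀ t ∈ K.faces, #t = d → #(K.facetsOver d t) = 2) (hA : A ∈ K.faces)
    (hcard : #A + 1 = d) (hV : #(K.lk A).vertexSet = 3) :
    K.HasBoundaryLink A (K.lk A).vertexSet := by
  refine ⟨hA, disjoint_right.2 fun x hx => (mem_vertexSet_lk.1 hx).1, ext fun γ => ?_⟩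
  set V := (K.lk A).vertexSet
  rw [mem_properFaces]
  constructor
  · intro hγ
    obtain ⟨hne, hdisj, hγA⟩ := mem_lk.1 hγ
    have hγV : γ ⊆ V := fun x hx =>
      mem_vertexSet.2 (mem_of_subset hγ (singleton_subset_iff.2 hx) (singleton_nonempty x))
    refine ⟨hne, hγV.ssubset_of_ne fun hγV => ?_⟩
    have := hK.card_le hγA
    rw [card_union_of_disjoint hdisj, hγV, hV] at this
    omega
  · rintro ⟨hne, hγV⟩
    obtain ⟨z, hzV, hzγ⟩ := exists_of_ssubset hγV
    obtain ⟨x, y, hxy, hVz⟩ : ∃ x y, x ≠ y ∧ V.erase z = {x, y} :=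
      card_eq_two.1 (by rw [card_erase_of_mem hzV, hV])
    have hxV : x ∈ V := erase_subset z V (hVz ▸ mem_insert_self x {y})
    have hyV : y ∈ V := erase_subset z V (hVz ▸ mem_insert_of_mem (mem_singleton_self y))
    have hlk : (K.lk (insert x A)).vertexSet = V.erase x :=
      eq_of_subset_of_card_le vertexSet_lk_insert_subset (by
        rw [card_vertexSet_lk_insert hridge hcard hxV, card_erase_of_mem hxV, hV])
    have hyxA : insert y (insert x A) ∈ K.faces :=
      (mem_vertexSet_lk.1 (hlk ▸ mem_erase.2 ⟨hxy.symm, hyV⟩)).2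
    have hγxy : γ ⊆ {x, y} := hVz ▸ subset_erase.2 ⟨hγV.1, hzγ⟩
    refine mem_lk.2 ⟨hne, disjoint_left.2 fun w hw => (mem_vertexSet_lk.1 (hγV.1 hw)).1, ?_⟩
    refine mem_of_subset hyxA (union_subset (fun w hw => ?_) ?_) (hne.mono subset_union_left)
    · have := hγxy hw
      grind
    · exact (subset_insert x A).trans (subset_insert y _)

theorem statement2_general (hK : K.IsNormalPseudomanifold 3)
    (hsimplex : ∀ S, #S = 5 → K.faces ≠ properFaces S)
    (hmiss : ∀ s, #s = 4 → properFaces s ⊆ K.faces → s ∈ K.faces)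
    (hmin : ∀ K' : SComplex, K'.IsNormalPseudomanifold 3 → BistellarTwoMove K K' → K.g2 ≤ K'.g2)
    (hA : A ∈ K.faces) (hcard : #A = 2) : 4 ≤ (K.lk A).fnum 0 := by
  have ⟨hpure, hstrong, hridge, _⟩ := hK
  rw [fnum_zero]
  by_contra! hdeg
  have hB : #(K.lk A).vertexSet = 3 := Nat.le_antisymm (Nat.le_of_lt_succ hdeg)
    (three_le_card_vertexSet_lk hpure hridge hA (by rw [hcard]))
  have h := hasBoundaryLink_vertexSet_lk hpure hridge hA (by rw [hcard]) hB
  have hS : #(A ∪ (K.lk A).vertexSet) = 5 := by rw [card_union_of_disjoint h.disjoint, hcard, hB]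
  by_cases hBK : (K.lk A).vertexSet ∈ K.faces
  · exact hsimplex _ hS (faces_eq_properFaces three_ne_zero hpure hstrong hridge hS
      (h.properFaces_subset hcard hBK (by rwa [hB])))
  · have hle := hmin _ (h.isNormalPseudomanifold_flip hS hBK hK)
      (h.bistellarTwoMove_flip hcard hB hBK)
    rw [h.g2_flip hcard (by omega)] at hle
    omega

end

/-- Lemma 3.1: in the class `R`, every edge has degree at least 4. -/
theorem statement2 (K : SComplex) (u v : ℕ) (hK : InClassR K)
    (huv : ({u, v} : Finset ℕ) ∈ K.faces) (hne : u ≠ v) :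
    4 ≤ (K.lk {u, v}).fnum 0 := by
  exact statement2_general hK.1 (fun _ => hK.faces_ne_properFaces) hK.2.2.2.1
    (fun K' hK' hmove => hK.2.2.2.2 K' hK' (.inl hmove)) huv (Finset.card_pair hne)

end SComplex
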